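/- Let λ=(λ_1,...,λ_l) be a partition of length l and N'_{λ,1} = λ_2+⋯+λ_l − (l−1). Let μ=(μ_1,...,μ_{l'}) be a partition of length l' ≥ l such that μ_i = λ_i for 2 ≤ i ≤ l and μ_i = 1 for l < i ≤ l'. Then ∂_1^{N'_{λ,1}} s_μ(t) evaluated at t = [x_1]−[x_2] equals c_λ · s_{(μ_1,1^{l'−1})}([x_1]−[x_2]), where c_λ = (N'_{λ,1}! / Π_{i=1}^{l−1}(w_i−1)!) · Π_{1≤i<j≤l−1}(w_j−w_i) with (w_l,...,w_1) = (λ_1,...,λ_l)+(l−1,...,1,0). -/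

import Mathlib

open MvPolynomial

/-- The polynomial `p_n(t)` defined by `exp(Σ_{n≥1} t_n k^n) = Σ_{n≥0} p_n(t) k^n`,
as a polynomial in the variables `t_1, t_2, ...` (variable `X n` stands for `t_n`). -/
noncomputable def pS (n : ℕ) : MvPolynomial ℕ ℚ :=
  ∑ m ∈ Finset.range (n + 1), (Nat.factorial m : ℚ)⁻¹ •
    ∑ c ∈ Finset.univ.filter
        (fun c : Fin m → Fin (n + 1) =>
          (∑ j, ((c j : ℕ))) = n ∧ ∀ j, 1 ≤ (c j : ℕ)),
      ∏ j, X ((c j : ℕ))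

/-- `p_n` for `n : ℤ`, with `p_n = 0` for `n < 0`. -/
noncomputable def pz (n : ℤ) : MvPolynomial ℕ ℚ :=
  if 0 ≤ n then pS n.toNat else 0

/-- The Schur function `s_λ(t) = det(p_{λ_i - i + j})_{1 ≤ i,j ≤ l}` (here `0`-indexed). -/
noncomputable def schur {l : ℕ} (lam : Fin l → ℕ) : MvPolynomial ℕ ℚ :=
  Matrix.det (Matrix.of fun a b : Fin l =>
    pz ((lam a : ℤ) - ((a : ℕ) : ℤ) + ((b : ℕ) : ℤ)))

/-- Substitution `t_n ↦ (x_1^n + ⋯ + x_k^n)/n`, i.e. `t = [x_1] + ⋯ + [x_k]`. -/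
noncomputable def toPowerSums (k : ℕ) (f : MvPolynomial ℕ ℚ) : MvPolynomial (Fin k) ℚ :=
  aeval (fun n : ℕ => (n : ℚ)⁻¹ • ∑ i : Fin k, X i ^ n) f

/-- Iterated partial derivative `∂_{i_1} ⋯ ∂_{i_r}` for a list `L = [i_1, ..., i_r]`. -/
noncomputable def derivs (L : List ℕ) (f : MvPolynomial ℕ ℚ) : MvPolynomial ℕ ℚ :=
  L.foldr (fun i g => pderiv i g) f

/-- The entries of a partition `λ` padded by zeros (`0`-indexed). -/
def pad {l : ℕ} (lam : Fin l → ℕ) (a : ℕ) : ℕ := if h : a < l then lam ⟨a, h⟩ else 0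

/-- Substitution `t_n ↦ (x_1^n - x_2^n)/n`, i.e. `t = [x_1] - [x_2]`
(here `x_1 = X 0`, `x_2 = X 1`). -/
noncomputable def toDiff (f : MvPolynomial ℕ ℚ) : MvPolynomial (Fin 2) ℚ :=
  aeval (fun n : ℕ => (n : ℚ)⁻¹ • (X 0 ^ n - X 1 ^ n)) f

section GeneratingSeries

variable {S : Type*} [CommRing S]

/-- The series `Σ_{n≥1} g_n k^n`, to be exponentiated. -/
noncomputable def expArg (g : ℕ → S) : PowerSeries S :=
  PowerSeries.mk fun n => if 1 ≤ n then g n else 0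

theorem coeff_expArg_pow_of_lt (g : ℕ → S) {n m : ℕ} (h : n < m) :
    PowerSeries.coeff n (expArg g ^ m) = 0 := by
  have hX : (PowerSeries.X : PowerSeries S) ∣ expArg g := by
    rw [PowerSeries.X_dvd_iff]
    simp [expArg, ← PowerSeries.coeff_zero_eq_constantCoeff_apply]
  exact PowerSeries.X_pow_dvd_iff.mp (pow_dvd_pow_of_dvd hX m) n h

theorem coeff_expArg_pow (g : ℕ → S) (n m : ℕ) :
    PowerSeries.coeff n (expArg g ^ m) =
      ∑ c ∈ Finset.univ.filter
        (fun c : Fin m → Fin (n + 1) => (∑ j, ((c j : ℕ))) = n ∧ ∀ j, 1 ≤ (c j : ℕ)),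
        ∏ j, g (c j : ℕ) := by
  classical
  have hpow : expArg g ^ m = ∏ _j : Fin m, expArg g := by simp
  rw [hpow, PowerSeries.coeff_prod]
  symm
  refine Finset.sum_bij_ne_zero (fun c _ _ => Finsupp.equivFunOnFinite.symm fun j => (c j : ℕ))
    ?_ ?_ ?_ ?_
  · intro c hc _
    simpa [Finset.mem_finsuppAntidiag] using (Finset.mem_filter.mp hc).2.1
  · intro c _ _ c' _ _ h
    ext j
    simpa using DFunLike.congr_fun h j
  · intro f hf hne
    have hsum : ∑ j, f j = n := by simpa [Finset.mem_finsuppAntidiag] using hf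
    have hle : ∀ j, f j < n + 1 := fun j =>
      Nat.lt_succ_of_le (hsum ▸ Finset.single_le_sum (fun _ _ => Nat.zero_le _)
        (Finset.mem_univ j))
    have hone : ∀ j, 1 ≤ f j := by
      intro j
      by_contra h
      exact hne (Finset.prod_eq_zero (Finset.mem_univ j) (by simp [expArg, h]))
    refine ⟨fun j => ⟨f j, hle j⟩, ?_, ?_, ?_⟩
    · simpa using ⟨hsum, hone⟩
    · convert hne using 1
      exact Finset.prod_congr rfl fun j _ => by simp [expArg, hone j]
    · ext j
      simp
  · intro c hc _
    refine Finset.prod_congr rfl fun j _ => ?_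
    simp [expArg, (Finset.mem_filter.mp hc).2.2 j]

variable [Algebra ℚ S]

/-- The series `exp(Σ_{n≥1} g_n k^n)`. -/
noncomputable def expSeries (g : ℕ → S) : PowerSeries S :=
  PowerSeries.mk fun n => aeval g (pS n)

theorem coeff_expSeries (g : ℕ → S) {n M : ℕ} (h : n < M) :
    PowerSeries.coeff n (expSeries g) =
      PowerSeries.coeff n (∑ m ∈ Finset.range M, (Nat.factorial m : ℚ)⁻¹ • expArg g ^ m) := by
  rw [expSeries, PowerSeries.coeff_mk, pS]
  simp only [map_sum, map_smul, map_prod, aeval_X]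
  rw [← Finset.sum_subset (Finset.range_mono h)]
  · refine Finset.sum_congr rfl fun m _ => ?_
    have := coeff_expArg_pow g n m
    rw [PowerSeries.coeff_smul, this]
  · intro m _ hm
    have := coeff_expArg_pow_of_lt g (n := n) (m := m) (by simpa using hm)
    simp [this]

theorem derivative_expSeries (g : ℕ → S) :
    PowerSeries.derivative S (expSeries g) =
      PowerSeries.derivative S (expArg g) * expSeries g := by
  ext n
  rw [PowerSeries.coeff_derivative, coeff_expSeries g (show n + 1 < n + 2 by omega),
    ← PowerSeries.coeff_derivative, PowerSeries.coeff_mul]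
  have hd : PowerSeries.derivative S
      (∑ m ∈ Finset.range (n + 2), (Nat.factorial m : ℚ)⁻¹ • expArg g ^ m) =
      PowerSeries.derivative S (expArg g) *
        ∑ m ∈ Finset.range (n + 1), (Nat.factorial m : ℚ)⁻¹ • expArg g ^ m := by
    rw [Finset.sum_range_succ', map_add, map_sum, Finset.mul_sum]
    simp only [pow_zero, Nat.factorial_zero, Nat.cast_one, inv_one, one_smul,
      Derivation.map_one_eq_zero, add_zero]
    refine Finset.sum_congr rfl fun m _ => ?_
    have hm : ((m + 1 : ℕ) : PowerSeries S) = algebraMap ℚ (PowerSeries S) ((m + 1 : ℕ) : ℚ) := by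
      simp
    have hf : ((Nat.factorial (m + 1) : ℕ) : ℚ)⁻¹ * ((m + 1 : ℕ) : ℚ) =
        ((Nat.factorial m : ℕ) : ℚ)⁻¹ := by
      rw [Nat.factorial_succ]
      push_cast
      field_simp
    rw [(PowerSeries.derivative S).map_smul_of_tower, PowerSeries.derivative_pow, hm, ← hf,
      Nat.add_sub_cancel, Algebra.smul_def, Algebra.smul_def, map_mul]
    ring
  rw [hd, PowerSeries.coeff_mul]
  refine Finset.sum_congr rfl fun p hp => ?_
  rw [coeff_expSeries g (show p.2 < n + 1 by
    have := Finset.HasAntidiagonal.mem_antidiagonal.mp hp; omega)]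

theorem eq_of_derivative_eq_mul {A F G : PowerSeries S}
    (hF : PowerSeries.derivative S F = A * F) (hG : PowerSeries.derivative S G = A * G)
    (h0 : PowerSeries.coeff 0 F = PowerSeries.coeff 0 G) : F = G := by
  ext n
  induction n using Nat.strong_induction_on with
  | _ n ih =>
    rcases n with _ | n
    · exact h0
    · have h1 := congrArg (PowerSeries.coeff n) hF
      have h2 := congrArg (PowerSeries.coeff n) hG
      rw [PowerSeries.coeff_derivative, PowerSeries.coeff_mul] at h1 h2
      have h3 : PowerSeries.coeff (n + 1) F * ((n : S) + 1) =
          PowerSeries.coeff (n + 1) G * ((n : S) + 1) := by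
        rw [h1, h2]
        refine Finset.sum_congr rfl fun p hp => ?_
        rw [ih p.2 (by have := Finset.HasAntidiagonal.mem_antidiagonal.mp hp; omega)]
      have hu : IsUnit ((n : S) + 1) := by
        have : IsUnit ((n : ℚ) + 1) := by
          rw [isUnit_iff_ne_zero]; positivity
        simpa using this.map (algebraMap ℚ S)
      exact hu.mul_left_injective h3

/-- With `t_n = (x^n - y^n)/n + δ_{n,1} u`, one has
`(1 - x k) exp(Σ t_n k^n) = (1 - y k) e^{uk}`. -/
theorem one_sub_mul_expSeries (x y u : S) (g : ℕ → S)
    (hg : ∀ n : ℕ, ((n : S) + 1) * g (n + 1) =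
      x ^ (n + 1) - y ^ (n + 1) + if n = 0 then u else 0) :
    (1 - PowerSeries.C x * PowerSeries.X) * expSeries g =
      (1 - PowerSeries.C y * PowerSeries.X) *
        PowerSeries.mk fun n => (Nat.factorial n : ℚ)⁻¹ • u ^ n := by
  set E : PowerSeries S := PowerSeries.mk fun n => (Nat.factorial n : ℚ)⁻¹ • u ^ n with hE
  have geom : ∀ z : S, (1 - PowerSeries.C z * PowerSeries.X) *
      PowerSeries.mk (fun n => z ^ n) = 1 := by
    intro z
    ext n
    rcases n with _ | n
    · simp
    · rw [sub_mul, one_mul, mul_assoc, map_sub, PowerSeries.coeff_C_mul,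
        PowerSeries.coeff_succ_X_mul]
      simp [PowerSeries.coeff_one, pow_succ']
  have hdE : PowerSeries.derivative S E = PowerSeries.C u * E := by
    ext n
    have hn : (n : S) + 1 = algebraMap ℚ S ((n : ℚ) + 1) := by simp
    have hf : ((Nat.factorial (n + 1) : ℕ) : ℚ)⁻¹ * ((n : ℚ) + 1) =
        ((Nat.factorial n : ℕ) : ℚ)⁻¹ := by
      rw [Nat.factorial_succ]
      push_cast
      field_simp
    rw [PowerSeries.coeff_derivative, PowerSeries.coeff_C_mul, hE, PowerSeries.coeff_mk,
      PowerSeries.coeff_mk, hn, ← hf, Algebra.smul_def, Algebra.smul_def, map_mul]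
    ring
  have hdA : PowerSeries.derivative S (expArg g) =
      PowerSeries.C x * PowerSeries.mk (fun n => x ^ n) -
        PowerSeries.C y * PowerSeries.mk (fun n => y ^ n) + PowerSeries.C u := by
    ext n
    simp [PowerSeries.coeff_derivative, expArg, PowerSeries.coeff_C, mul_comm _ ((n : S) + 1), hg, pow_succ']
  have hlin : ∀ z : S, PowerSeries.derivative S (1 - PowerSeries.C z * PowerSeries.X) =
      - PowerSeries.C z := by
    intro z
    simp
  set P := PowerSeries.mk (fun n => x ^ n) with hP
  set Q := PowerSeries.mk (fun n => y ^ n) with hQ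
  have hdP : PowerSeries.derivative S P = PowerSeries.C x * P * P := by
    have h := congrArg (PowerSeries.derivative S) (geom x)
    rw [Derivation.leibniz, hlin] at h
    simp only [smul_eq_mul, Derivation.map_one_eq_zero] at h
    linear_combination P * h - PowerSeries.derivative S P * geom x
  have key : expSeries g = P * ((1 - PowerSeries.C y * PowerSeries.X) * E) := by
    refine eq_of_derivative_eq_mul (derivative_expSeries g) ?_ ?_
    · rw [hdA, Derivation.leibniz, Derivation.leibniz, hlin, hdE, hdP]
      simp only [smul_eq_mul]
      linear_combination (PowerSeries.C y * P * E) * geom y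
    · simp [hE, hP, expSeries, pS]
  rw [key]
  linear_combination ((1 - PowerSeries.C y * PowerSeries.X) * E) * geom x

end GeneratingSeries

section Shift

/-- The substitution `t_n ↦ (x_1^n - x_2^n)/n + δ_{n,1} u`, with `u` the polynomial variable. -/
noncomputable def shiftValue (n : ℕ) : Polynomial (MvPolynomial (Fin 2) ℚ) :=
  Polynomial.C ((n : ℚ)⁻¹ • (X 0 ^ n - X 1 ^ n)) + if n = 1 then Polynomial.X else 0

/-- The algebra map `f(t) ↦ f([x_1] - [x_2] + (u, 0, 0, …))`. -/
noncomputable def shiftHom :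
    MvPolynomial ℕ ℚ →ₐ[ℚ] Polynomial (MvPolynomial (Fin 2) ℚ) :=
  aeval shiftValue

theorem derivative_shiftHom (f : MvPolynomial ℕ ℚ) :
    Polynomial.derivative (shiftHom f) = shiftHom (pderiv 1 f) := by
  induction f using MvPolynomial.induction_on with
  | C a =>
    simp [shiftHom, IsScalarTower.algebraMap_apply ℚ (MvPolynomial (Fin 2) ℚ)
      (Polynomial (MvPolynomial (Fin 2) ℚ)), Polynomial.algebraMap_eq]
  | add p q hp hq => simp only [map_add, hp, hq]
  | mul_X p n hp =>
    rw [map_mul, Polynomial.derivative_mul, hp, Derivation.leibniz, map_add, smul_eq_mul,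
      smul_eq_mul, map_mul, map_mul, pderiv_X]
    by_cases h : n = 1
    · subst h
      simp [shiftHom, shiftValue]
      ring
    · simp [shiftHom, shiftValue, h]
      ring

theorem shiftHom_derivs_replicate (N : ℕ) (f : MvPolynomial ℕ ℚ) :
    shiftHom (derivs (List.replicate N 1) f) = Polynomial.derivative^[N] (shiftHom f) := by
  induction N with
  | zero => simp [derivs]
  | succ N ih =>
    rw [Function.iterate_succ_apply', ← ih, derivative_shiftHom]
    rfl

theorem toDiff_eq_coeff_zero (f : MvPolynomial ℕ ℚ) : toDiff f = (shiftHom f).coeff 0 := by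
  induction f using MvPolynomial.induction_on with
  | C a =>
    simp [shiftHom, toDiff, IsScalarTower.algebraMap_apply ℚ (MvPolynomial (Fin 2) ℚ)
      (Polynomial (MvPolynomial (Fin 2) ℚ)), Polynomial.algebraMap_eq]
  | add p q hp hq => simp_all [toDiff]
  | mul_X p n hp =>
    rw [map_mul, Polynomial.mul_coeff_zero, ← hp]
    by_cases h : n = 1 <;> simp [toDiff, shiftHom, shiftValue, h]

theorem toDiff_derivs_replicate (N : ℕ) (f : MvPolynomial ℕ ℚ) :
    toDiff (derivs (List.replicate N 1) f) = N.factorial • (shiftHom f).coeff N := by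
  rw [toDiff_eq_coeff_zero, shiftHom_derivs_replicate, Polynomial.coeff_iterate_derivative]
  simp [Nat.descFactorial_self]

/-- `1 / z!`, with the convention that it vanishes for negative `z`. -/
noncomputable def invFactorial (z : ℤ) : ℚ :=
  if 0 ≤ z then (Nat.factorial z.toNat : ℚ)⁻¹ else 0

/-- The divided power `u^z / z!`, with the convention that it vanishes for negative `z`. -/
noncomputable def dividedPower (z : ℤ) : Polynomial (MvPolynomial (Fin 2) ℚ) :=
  invFactorial z • Polynomial.X ^ z.toNat

theorem dividedPower_of_neg {z : ℤ} (hz : z < 0) : dividedPower z = 0 := by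
  simp [dividedPower, invFactorial, not_le.mpr hz]

theorem shiftHom_pz (z : ℤ) :
    shiftHom (pz z) = dividedPower z - Polynomial.C (X 1) * dividedPower (z - 1) +
      Polynomial.C (X 0) * shiftHom (pz (z - 1)) := by
  have hser := one_sub_mul_expSeries (Polynomial.C (X 0)) (Polynomial.C (X 1)) Polynomial.X
    shiftValue (fun n => by
      have h : ((n : Polynomial (MvPolynomial (Fin 2) ℚ)) + 1) =
          algebraMap ℚ _ ((n : ℚ) + 1) := by simp
      have hC : ∀ p : MvPolynomial (Fin 2) ℚ, algebraMap ℚ (Polynomial (MvPolynomial (Fin 2) ℚ))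
          ((n : ℚ) + 1) * Polynomial.C (((n + 1 : ℕ) : ℚ)⁻¹ • p) = Polynomial.C p := by
        intro p
        rw [← Algebra.smul_def, Polynomial.smul_C, smul_smul, Nat.cast_succ, mul_inv_cancel₀
          (by positivity), one_smul]
      rw [h, shiftValue, mul_add, hC]
      rcases n with _ | n <;> simp)
  rcases lt_trichotomy z 0 with hz | rfl | hz
  · rw [dividedPower_of_neg hz, dividedPower_of_neg (by omega), pz, pz, if_neg (by omega),
      if_neg (by omega)]
    simp
  · rw [dividedPower_of_neg (z := 0 - 1) (by omega)]
    simp [pz, pS, dividedPower, invFactorial]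
  · obtain ⟨n, rfl⟩ : ∃ n : ℕ, z = n + 1 := ⟨(z - 1).toNat, by omega⟩
    have h := congrArg (PowerSeries.coeff (n + 1)) hser
    rw [sub_mul, sub_mul, one_mul, one_mul, mul_assoc, mul_assoc, map_sub, map_sub,
      PowerSeries.coeff_C_mul, PowerSeries.coeff_C_mul, PowerSeries.coeff_succ_X_mul,
      PowerSeries.coeff_succ_X_mul] at h
    simp only [expSeries, PowerSeries.coeff_mk] at h
    have e1 : dividedPower ((n : ℤ) + 1) =
        ((Nat.factorial (n + 1) : ℕ) : ℚ)⁻¹ • Polynomial.X ^ (n + 1) := by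
      have : ((n : ℤ) + 1).toNat = n + 1 := by omega
      rw [dividedPower, invFactorial, if_pos (by omega), this]
    have e2 : dividedPower ((n : ℤ) + 1 - 1) =
        ((Nat.factorial n : ℕ) : ℚ)⁻¹ • Polynomial.X ^ n := by
      simp [dividedPower, invFactorial]
    have e3 : pz ((n : ℤ) + 1) = pS (n + 1) := by
      rw [pz, if_pos (by omega)]; rfl
    have e4 : pz ((n : ℤ) + 1 - 1) = pS n := by
      rw [add_sub_cancel_right, pz, if_pos (by omega)]; rfl
    rw [e1, e2, e3, e4]
    exact sub_eq_iff_eq_add.mp h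

end Shift

section LowestCoefficient

variable {R : Type*} [CommRing R]

/-- Coefficient of a polynomial at an integer exponent. -/
def intCoeff (p : Polynomial R) (z : ℤ) : R := if 0 ≤ z then p.coeff z.toNat else 0

theorem intCoeff_natCast (p : Polynomial R) (n : ℕ) : intCoeff p n = p.coeff n := by
  simp [intCoeff]

theorem intCoeff_of_neg (p : Polynomial R) {z : ℤ} (hz : z < 0) : intCoeff p z = 0 := by
  simp [intCoeff, not_le.mpr hz]

/-- All coefficients of `p` below the integer `z` vanish. -/
def LowerBound (p : Polynomial R) (z : ℤ) : Prop := ∀ k < z, intCoeff p k = 0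

theorem lowerBound_zero (p : Polynomial R) : LowerBound p 0 := fun _ hk => intCoeff_of_neg p hk

theorem LowerBound.mul {p q : Polynomial R} {z w : ℤ} (hp : LowerBound p z)
    (hq : LowerBound q w) :
    LowerBound (p * q) (z + w) ∧ intCoeff (p * q) (z + w) = intCoeff p z * intCoeff q w := by
  have term : ∀ i j : ℕ, ((i : ℤ) < z ∨ (j : ℤ) < w) → p.coeff i * q.coeff j = 0 := by
    rintro i j (h | h)
    · rw [← intCoeff_natCast p, hp _ h, zero_mul]
    · rw [← intCoeff_natCast q, hq _ h, mul_zero]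
  constructor
  · intro k hk
    rcases lt_or_ge k 0 with h | h
    · exact intCoeff_of_neg _ h
    · lift k to ℕ using h
      rw [intCoeff_natCast, Polynomial.coeff_mul]
      refine Finset.sum_eq_zero fun x hx => term _ _ ?_
      have := Finset.HasAntidiagonal.mem_antidiagonal.mp hx
      omega
  · rcases lt_or_ge (z + w) 0 with h | h
    · rw [intCoeff_of_neg _ h]
      rcases lt_or_ge z 0 with h' | h'
      · rw [intCoeff_of_neg p h', zero_mul]
      · rw [intCoeff_of_neg q (by omega), mul_zero]
    · obtain ⟨n, hn⟩ := Int.eq_ofNat_of_zero_le h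
      rw [hn, intCoeff_natCast, Polynomial.coeff_mul]
      by_cases hzw : 0 ≤ z ∧ 0 ≤ w
      · obtain ⟨hz, hw⟩ := hzw
        lift z to ℕ using hz
        lift w to ℕ using hw
        rw [intCoeff_natCast, intCoeff_natCast]
        refine Finset.sum_eq_single_of_mem (z, w)
          (Finset.HasAntidiagonal.mem_antidiagonal.mpr (by omega)) fun x hx hne => term _ _ ?_
        have := Finset.HasAntidiagonal.mem_antidiagonal.mp hx
        by_contra! hcon
        exact hne (Prod.ext (by omega) (by omega))
      · have h0 : intCoeff p z * intCoeff q w = 0 := by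
          rcases lt_or_ge z 0 with h' | h'
          · rw [intCoeff_of_neg p h', zero_mul]
          · rw [intCoeff_of_neg q (by omega), mul_zero]
        rw [h0]
        refine Finset.sum_eq_zero fun x hx => term _ _ ?_
        have := Finset.HasAntidiagonal.mem_antidiagonal.mp hx
        omega

theorem LowerBound.prod {ι : Type*} (s : Finset ι) {p : ι → Polynomial R} {z : ι → ℤ}
    (h : ∀ i ∈ s, LowerBound (p i) (z i)) :
    LowerBound (∏ i ∈ s, p i) (∑ i ∈ s, z i) ∧
      intCoeff (∏ i ∈ s, p i) (∑ i ∈ s, z i) = ∏ i ∈ s, intCoeff (p i) (z i) := by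
  classical
  induction s using Finset.induction_on with
  | empty => exact ⟨lowerBound_zero _, by simp [intCoeff]⟩
  | insert a s ha ih =>
    obtain ⟨h1, h2⟩ := ih fun i hi => h i (Finset.mem_insert_of_mem hi)
    rw [Finset.prod_insert ha, Finset.sum_insert ha, Finset.prod_insert ha, ← h2]
    exact (h a (Finset.mem_insert_self a s)).mul h1

/-- The coefficient map at an integer exponent, as an additive map. -/
def intCoeffHom (z : ℤ) : Polynomial R →+ R where
  toFun p := intCoeff p z
  map_zero' := by simp [intCoeff]
  map_add' p q := by by_cases h : 0 ≤ z <;> simp [intCoeff, h]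

theorem intCoeffHom_apply (z : ℤ) (p : Polynomial R) : intCoeffHom z p = intCoeff p z := rfl

theorem LowerBound.det {n : ℕ} {A : Matrix (Fin n) (Fin n) (Polynomial R)} {r s : Fin n → ℤ}
    (h : ∀ i j, LowerBound (A i j) (r i + s j)) :
    LowerBound A.det (∑ i, r i + ∑ j, s j) ∧
      intCoeff A.det (∑ i, r i + ∑ j, s j) =
        (Matrix.of fun i j => intCoeff (A i j) (r i + s j)).det := by
  have hsum : ∀ σ : Equiv.Perm (Fin n), ∑ i, r i + ∑ j, s j = ∑ i, (r (σ i) + s i) := by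
    intro σ
    rw [Finset.sum_add_distrib, Equiv.sum_comp σ r]
  constructor
  · intro k hk
    rw [← intCoeffHom_apply, Matrix.det_apply, map_sum]
    refine Finset.sum_eq_zero fun σ _ => ?_
    rw [hsum σ] at hk
    rw [Units.smul_def, map_zsmul, intCoeffHom_apply,
      (LowerBound.prod Finset.univ fun i _ => h (σ i) i).1 k hk, smul_zero]
  · rw [← intCoeffHom_apply, Matrix.det_apply, Matrix.det_apply, map_sum]
    refine Finset.sum_congr rfl fun σ _ => ?_
    rw [Units.smul_def, Units.smul_def, map_zsmul, hsum σ]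
    exact congrArg _ (LowerBound.prod Finset.univ fun i _ => h (σ i) i).2

end LowestCoefficient

section Determinants

theorem lowerBound_dividedPower (z : ℤ) : LowerBound (dividedPower z) z := by
  intro k hk
  rcases lt_or_ge k 0 with h | h
  · exact intCoeff_of_neg _ h
  · lift k to ℕ using h
    rw [intCoeff_natCast, dividedPower, Polynomial.coeff_smul, Polynomial.coeff_X_pow,
      if_neg (by omega), smul_zero]

theorem intCoeff_dividedPower (z : ℤ) :
    intCoeff (dividedPower z) z = MvPolynomial.C (invFactorial z) := by
  rcases lt_or_ge z 0 with h | h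
  · rw [intCoeff_of_neg _ h, invFactorial, if_neg (by omega), map_zero]
  · lift z to ℕ using h
    simp [intCoeff_natCast, dividedPower, Polynomial.coeff_smul, MvPolynomial.smul_eq_C_mul]

theorem dividedPower_sub_lowest (z : ℤ) :
    LowerBound (dividedPower (z + 1) - Polynomial.C (X 1) * dividedPower z) z ∧
      intCoeff (dividedPower (z + 1) - Polynomial.C (X 1) * dividedPower z) z =
        -X 1 * MvPolynomial.C (invFactorial z) := by
  have hC : LowerBound (Polynomial.C (X 1 : MvPolynomial (Fin 2) ℚ)) 0 := lowerBound_zero _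
  have hmul := hC.mul (lowerBound_dividedPower z)
  rw [zero_add] at hmul
  have hsub : ∀ k p q, intCoeff (p - q : Polynomial (MvPolynomial (Fin 2) ℚ)) k =
      intCoeff p k - intCoeff q k := fun k p q => map_sub (intCoeffHom k) p q
  constructor
  · intro k hk
    rw [hsub, lowerBound_dividedPower _ k (by omega), hmul.1 k hk, sub_zero]
  · rw [hsub, lowerBound_dividedPower _ z (by omega), hmul.2, intCoeff_dividedPower]
    simp [intCoeff]

/-- The determinant `det(1 / (ν_i - i + j)!)` of size `d`. -/
noncomputable def invFactorialDet (d : ℕ) (ν : ℕ → ℕ) : ℚ :=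
  (Matrix.of fun i j : Fin d => invFactorial ((ν i : ℤ) - (i : ℕ) + (j : ℕ))).det

theorem toDiff_derivs_schur {d : ℕ} (mu : Fin (d + 1) → ℕ) (ν : ℕ → ℕ)
    (hmax : ∀ a, mu a ≤ mu 0) (hν : ∀ a : Fin d, mu a.succ = ν a + 1) :
    toDiff (derivs (List.replicate (∑ a : Fin d, ν a) 1) (schur mu)) =
      ((∑ a : Fin d, ν a).factorial * invFactorialDet d ν) •
        ((shiftHom (pz (mu 0))).coeff 0 * (-X 1) ^ d) := by
  set N := ∑ a : Fin d, ν a with hN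
  set m : Fin (d + 1) → ℤ := fun a => (mu a : ℤ) - (a : ℕ) with hm
  set f : ℤ → Polynomial (MvPolynomial (Fin 2) ℚ) := fun z => shiftHom (pz z) with hf
  set B : Matrix (Fin (d + 1)) (Fin (d + 1)) (Polynomial (MvPolynomial (Fin 2) ℚ)) :=
    Matrix.of fun a b => Fin.cases (f (m a)) (fun j : Fin d =>
      dividedPower (m a + (j : ℕ) + 1) - Polynomial.C (X 1) * dividedPower (m a + (j : ℕ))) b
    with hB
  have hdet : shiftHom (schur mu) = B.det := by
    rw [schur, AlgHom.map_det]
    refine Matrix.det_eq_of_forall_col_eq_smul_add_pred (fun _ => Polynomial.C (X 0)) ?_ ?_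
    · intro a
      simp [hB, hf, hm]
    · intro a j
      have h := shiftHom_pz (m a + (j : ℕ) + 1)
      rw [add_sub_cancel_right] at h
      simpa [hB, hm, add_assoc] using h
  have hminor := fun a : Fin (d + 1) => LowerBound.det
    (A := B.submatrix a.succAbove Fin.succ) (r := fun i => m (a.succAbove i))
    (s := fun j : Fin d => ((j : ℕ) : ℤ))
    fun i j => (dividedPower_sub_lowest (m (a.succAbove i) + (j : ℕ))).1
  have hNm : (N : ℤ) = ∑ i : Fin d, m i.succ + ∑ j : Fin d, ((j : ℕ) : ℤ) := by
    rw [← Finset.sum_add_distrib, hN, Nat.cast_sum]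
    refine Finset.sum_congr rfl fun a _ => ?_
    simp [hm, hν]
  have hlow : ∀ a, a ≠ 0 →
      intCoeff (f (m a) * (B.submatrix a.succAbove Fin.succ).det) N = 0 := by
    intro a ha
    refine ((lowerBound_zero (f (m a))).mul (hminor a).1).1 _ ?_
    have h1 := Fin.sum_univ_succAbove m a
    have h2 := Fin.sum_univ_succ m
    have h3 : m a < m 0 := by
      have := hmax a
      have : 0 < (a : ℕ) := Nat.pos_of_ne_zero fun h => ha (Fin.ext h)
      simp only [hm, Fin.val_zero]
      omega
    omega
  have hzero : intCoeff (f (m 0) * (B.submatrix (Fin.succAbove 0) Fin.succ).det) N =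
      (f (m 0)).coeff 0 * ((-X 1) ^ d * MvPolynomial.C (invFactorialDet d ν)) := by
    have h := ((lowerBound_zero (f (m 0))).mul (hminor 0).1).2
    have hN0 : (N : ℤ) = 0 + (∑ i, m (Fin.succAbove 0 i) + ∑ j : Fin d, ((j : ℕ) : ℤ)) := by
      simpa using hNm
    rw [hN0, h, (hminor 0).2]
    refine congrArg₂ _ (intCoeff_natCast _ 0) ?_
    have hmat : (Matrix.of fun i j : Fin d =>
        intCoeff (B.submatrix (Fin.succAbove 0) Fin.succ i j)
          (m (Fin.succAbove 0 i) + (j : ℕ))) = (-X 1 : MvPolynomial (Fin 2) ℚ) •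
        (MvPolynomial.C : ℚ →+* MvPolynomial (Fin 2) ℚ).mapMatrix
          (Matrix.of fun i j : Fin d => invFactorial ((ν i : ℤ) - (i : ℕ) + (j : ℕ))) := by
      ext1 i j
      have hz : m i.succ + (j : ℕ) = (ν i : ℤ) - (i : ℕ) + (j : ℕ) := by
        simp [hm, hν]
      have := (dividedPower_sub_lowest (m i.succ + (j : ℕ))).2
      rw [hz] at this
      simpa [hB, hz] using this
    rw [hmat, Matrix.det_smul, Fintype.card_fin, ← RingHom.map_det]
    rfl
  rw [toDiff_derivs_replicate, hdet, Matrix.det_succ_column_zero, ← intCoeff_natCast]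
  have hsum : intCoeff (∑ a : Fin (d + 1), (-1) ^ (a : ℕ) * B a 0 *
      (B.submatrix a.succAbove Fin.succ).det) N =
      (f (m 0)).coeff 0 * ((-X 1) ^ d * MvPolynomial.C (invFactorialDet d ν)) := by
    rw [← hzero, ← intCoeffHom_apply, ← intCoeffHom_apply, map_sum, Finset.sum_eq_single_of_mem 0 (Finset.mem_univ _)]
    · simp [hB]
    · intro a _ ha
      have : (-1) ^ (a : ℕ) * B a 0 * (B.submatrix a.succAbove Fin.succ).det =
          ((-1 : ℤ) ^ (a : ℕ)) • (f (m a) * (B.submatrix a.succAbove Fin.succ).det) := by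
        simp [hB, mul_assoc]
      rw [this, map_zsmul, intCoeffHom_apply, hlow a ha, smul_zero]
  have hm0 : f (m 0) = shiftHom (pz (mu 0)) := by simp [hf, hm]
  rw [hsum, hm0, MvPolynomial.smul_eq_C_mul, map_mul, nsmul_eq_mul, map_natCast]
  ring

theorem invFactorialDet_succ {d : ℕ} {ν : ℕ → ℕ} (h : ν d = 0) :
    invFactorialDet (d + 1) ν = invFactorialDet d ν := by
  rw [invFactorialDet, Matrix.det_succ_row _ (Fin.last d),
    Finset.sum_eq_single_of_mem (Fin.last d) (Finset.mem_univ _)]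
  · simp [h, invFactorial, invFactorialDet, Matrix.submatrix, Fin.succAbove_last, ← two_mul]
  · intro j _ hj
    have : (j : ℕ) < d := Fin.val_lt_last hj
    have h0 : invFactorial ((ν d : ℤ) - (d : ℕ) + (j : ℕ)) = 0 := by
      rw [invFactorial, if_neg (by omega)]
    simp [h0]

theorem invFactorialDet_of_le {d e : ℕ} (hde : d ≤ e) {ν : ℕ → ℕ}
    (h : ∀ a, d ≤ a → a < e → ν a = 0) : invFactorialDet e ν = invFactorialDet d ν := by
  induction e, hde using Nat.le_induction with
  | base => rfl
  | succ e hde ih =>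
    rw [invFactorialDet_succ (h e hde (Nat.lt_succ_self e)),
      ih fun a h1 h2 => h a h1 (Nat.lt_succ_of_lt h2)]

theorem invFactorial_sub (w j : ℕ) :
    invFactorial ((w : ℤ) - j) = (w.factorial : ℚ)⁻¹ * w.descFactorial j := by
  rcases lt_or_ge w j with h | h
  · rw [invFactorial, if_neg (by omega), Nat.descFactorial_of_lt h]
    simp
  · have h1 : ((w : ℤ) - j).toNat = w - j := by omega
    have h2 : (w - j).factorial * w.descFactorial j = w.factorial :=
      Nat.factorial_mul_descFactorial h
    have h3 : ((w - j).factorial : ℚ) ≠ 0 := by positivity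
    rw [invFactorial, if_pos (by omega), h1, ← h2]
    have h4 : (w.descFactorial j : ℚ) ≠ 0 := by
      have := Nat.descFactorial_pos.mpr h
      positivity
    push_cast
    field_simp

theorem invFactorialDet_eq (d : ℕ) (ν : ℕ → ℕ) :
    invFactorialDet d ν =
      (∏ i ∈ Finset.range d, ((ν (d - 1 - i) + i).factorial : ℚ))⁻¹ *
        ∏ j ∈ Finset.range d, ∏ i ∈ Finset.range j,
          (((ν (d - 1 - j) + j : ℕ) : ℚ) - ((ν (d - 1 - i) + i : ℕ) : ℚ)) := by
  set w : ℕ → ℕ := fun i => ν (d - 1 - i) + i with hw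
  have hmat : ∀ i j : Fin d, invFactorial ((ν (Fin.rev i) : ℤ) - ((Fin.rev i : Fin d) : ℕ) +
      ((Fin.rev j : Fin d) : ℕ)) = ((w i).factorial : ℚ)⁻¹ *
        (descPochhammer ℚ j).eval (w i : ℚ) := by
    intro i j
    have hi := i.isLt
    have hj := j.isLt
    rw [descPochhammer_eval_eq_descFactorial, ← invFactorial_sub]
    have : d - 1 - (i : ℕ) = d - (i + 1) := by omega
    rw [Fin.val_rev, Fin.val_rev, hw]
    simp only [this]
    congr 1
    omega
  rw [invFactorialDet, ← Matrix.det_submatrix_equiv_self Fin.revPerm]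
  have hsub : (Matrix.of fun i j : Fin d => invFactorial ((ν i : ℤ) - (i : ℕ) + (j : ℕ))).submatrix
      Fin.revPerm Fin.revPerm = Matrix.of fun i j : Fin d => ((w i).factorial : ℚ)⁻¹ *
        Matrix.of (fun i j : Fin d => (descPochhammer ℚ j).eval (w i : ℚ)) i j := by
    ext i j
    simpa using hmat i j
  rw [hsub, Matrix.det_mul_column, ← Matrix.det_eval_matrixOfPolynomials_eq_det_vandermonde
    (fun i : Fin d => (w i : ℚ)) (fun j : Fin d => descPochhammer ℚ j)
    (fun i => descPochhammer_natDegree ℚ i) (fun i => monic_descPochhammer ℚ i),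
    Matrix.det_vandermonde, Finset.prod_inv_distrib,
    Fin.prod_univ_eq_prod_range (fun i => ((w i).factorial : ℚ)) d]
  congr 1
  rw [Finset.prod_sigma', Finset.prod_sigma']
  refine Finset.prod_bij' (fun x _ => ⟨x.2, x.1⟩)
    (fun (x : Σ _ : ℕ, ℕ) (hx : x ∈ (Finset.range d).sigma fun j => Finset.range j) =>
      (⟨⟨x.2, by simp at hx; omega⟩, ⟨x.1, by simp at hx; omega⟩⟩ : Σ _ : Fin d, Fin d))
    ?_ ?_ ?_ ?_ ?_
  · rintro ⟨i, j⟩ hx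
    simpa using hx
  · rintro ⟨j, i⟩ hx
    simpa using (Finset.mem_sigma.mp hx).2
  · rintro ⟨i, j⟩ _
    rfl
  · rintro ⟨j, i⟩ _
    rfl
  · rintro ⟨i, j⟩ _
    rfl

end Determinants

/-- Let `λ` be a partition of length `l`,
`N'_{λ,1} = λ_2+⋯+λ_l - (l-1)`, and `μ` a partition of length `l' ≥ l` with `μ_i = λ_i` for
`2 ≤ i ≤ l` and `μ_i = 1` for `l < i ≤ l'`. Then `∂_1^{N'_{λ,1}} s_μ` at `t = [x_1]-[x_2]`
equals `c_λ · s_{(μ_1,1^{l'-1})}([x_1]-[x_2])`, where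
`c_λ = (N'_{λ,1}! / Π_{i=1}^{l-1} (w_i-1)!) · Π_{1≤i<j≤l-1} (w_j - w_i)` and
`(w_l,...,w_1) = (λ_1,...,λ_l) + (l-1,...,1,0)`. -/
theorem statement15 (l : ℕ) (hl : 1 ≤ l) (lam : Fin l → ℕ)
    (hanti : Antitone lam) (hpos : ∀ i, 1 ≤ lam i)
    (l' : ℕ) (hll' : l ≤ l') (mu : Fin l' → ℕ)
    (hmuanti : Antitone mu) (hmupos : ∀ i, 1 ≤ mu i)
    (hmid : ∀ a : ℕ, 1 ≤ a → a < l → pad mu a = pad lam a)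
    (htail : ∀ a : ℕ, l ≤ a → a < l' → pad mu a = 1)
    (N' : ℕ) (hN' : N' = (∑ a ∈ Finset.Ico 1 l, pad lam a) - (l - 1))
    (c : ℚ)
    (hc : c = (Nat.factorial N' : ℚ)
          / (∏ i ∈ Finset.range (l - 1), (Nat.factorial (pad lam (l - 1 - i) + i - 1) : ℚ))
        * ∏ j ∈ Finset.range (l - 1), ∏ i ∈ Finset.range j,
            (((pad lam (l - 1 - j) + j : ℕ) : ℚ) - ((pad lam (l - 1 - i) + i : ℕ) : ℚ))) :
    toDiff (derivs (List.replicate N' 1) (schur mu))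
      = c • toDiff (schur (fun a : Fin l' => if (a : ℕ) = 0 then pad mu 0 else 1)) := by
  obtain ⟨d, rfl⟩ : ∃ d, l' = d + 1 := ⟨l' - 1, by omega⟩
  set ν : ℕ → ℕ := fun a => pad mu (a + 1) - 1 with hνdef
  have hpad : ∀ a : Fin d, mu a.succ = pad mu (a + 1) := fun a => by
    simp [pad, Fin.succ]
  have hν : ∀ a : Fin d, mu a.succ = ν a + 1 := fun a => by
    have := hmupos a.succ
    simp only [hνdef, ← hpad]
    omega
  have htail0 : ∀ a, l - 1 ≤ a → a < d → ν a = 0 := fun a h1 h2 => by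
    simp [hνdef, htail (a + 1) (by omega) (by omega)]
  have hlampos : ∀ a, a < l → 1 ≤ pad lam a := fun a h => by simp [pad, h, hpos]
  have hνlam : ∀ a, a < l - 1 → ν a + 1 = pad lam (a + 1) := fun a h => by
    have := hlampos (a + 1) (by omega)
    simp only [hνdef, hmid (a + 1) (by omega) (by omega)]
    omega
  have hNsum : N' = ∑ a : Fin d, ν a := by
    have h1 : ∑ a : Fin d, ν a = ∑ a ∈ Finset.range (l - 1), ν a := by
      rw [Fin.sum_univ_eq_sum_range ν d]
      refine (Finset.sum_subset (Finset.range_mono (by omega)) fun a ha hna => ?_).symm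
      exact htail0 a (by simpa using hna) (by simpa using ha)
    have h2 : ∑ a ∈ Finset.Ico 1 l, pad lam a = ∑ a ∈ Finset.range (l - 1), (ν a + 1) := by
      rw [Finset.sum_Ico_eq_sum_range]
      refine Finset.sum_congr rfl fun a ha => ?_
      rw [hνlam a (by simpa using ha), add_comm]
    rw [hN', h1, h2, Finset.sum_add_distrib]
    simp
  have hc' : c = N'.factorial * invFactorialDet d ν := by
    have hw : ∀ i, i < l - 1 → pad lam (l - 1 - i) = ν (l - 1 - 1 - i) + 1 := fun i hi => by
      rw [hνlam _ (by omega)]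
      congr 1
      omega
    rw [invFactorialDet_of_le (show l - 1 ≤ d by omega) htail0, invFactorialDet_eq, hc,
      div_eq_mul_inv, mul_assoc]
    congr 2
    · congr 1
      refine Finset.prod_congr rfl fun i hi => ?_
      rw [hw i (by simpa using hi)]
      congr 2
      omega
    · refine Finset.prod_congr rfl fun j hj => Finset.prod_congr rfl fun i hi => ?_
      have hj' := Finset.mem_range.mp hj
      have hi' := Finset.mem_range.mp hi
      rw [hw j hj', hw i (by omega)]
      push_cast
      ring
  have hmu0 : pad mu 0 = mu 0 := by simp [pad]
  have hmain := toDiff_derivs_schur mu ν (fun a => hmuanti (Fin.zero_le a)) hν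
  have hhook := toDiff_derivs_schur
    (fun a : Fin (d + 1) => if (a : ℕ) = 0 then pad mu 0 else 1) (fun _ => 0)
    (fun a => by
      have := hmupos 0
      split_ifs <;> simp_all) (fun a => by simp)
  have hdet1 : invFactorialDet d (fun _ => 0) = 1 := by
    rw [invFactorialDet_of_le (Nat.zero_le d) fun _ _ _ => rfl, invFactorialDet,
      Matrix.det_isEmpty]
  simp only [Finset.sum_const_zero, List.replicate_zero, hdet1] at hhook
  rw [hNsum, hmain, ← hNsum, hc']
  congr 1
  simpa [derivs, hmu0] using hhook.symm
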